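/- Let E be an ordered Polish space and P a monotone Markov kernel on E. For any finite or countable sequence x₁ ⪯ x₂ ⪯ … ⪯ x_k ⪯ … of elements of E, there exists a coupling on a common probability space of the Markov chains X^{x₁}, X^{x₂}, …, X^{x_k}, … (each with kernel P and the indicated initial state) such that Xₙ^{x₁} ⪯ Xₙ^{x₂} ⪯ … ⪯ Xₙ^{x_k} ⪯ … almost surely, for all n ≥ 0. -/

import Mathlib

open MeasureTheory ProbabilityTheory Filter Topology

/-- `μ` is *stochastically smaller* than `ν` (written `μ ⪯ ν` in the paper):
`μ I ≤ ν I` for every Borel increasing (upper) set `I`. -/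
def StochDom {E : Type*} [MeasurableSpace E] [Preorder E] (μ ν : Measure E) : Prop :=
  ∀ I : Set E, MeasurableSet I → IsUpperSet I → μ I ≤ ν I

/-- A Markov kernel `P` is *(stochastically) monotone* if for every bounded monotone
measurable `g : E → [0,1]` the map `x ↦ ∫ g dP(x)` is again monotone. -/
def MonotoneKernel {E : Type*} [MeasurableSpace E] [Preorder E] (P : Kernel E E) : Prop :=
  ∀ g : E → ℝ, Measurable g → Monotone g → (∀ x, g x ∈ Set.Icc (0 : ℝ) 1) →
    Monotone fun x => ∫ y, g y ∂(P x)

/-- The `n`-step transition kernel `P⁽ⁿ⁾` of a Markov kernel `P`;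
`kpow P n x` is the law of `Xₙˣ`, the chain with kernel `P` started at `x`. -/
noncomputable def kpow {E : Type*} [MeasurableSpace E] (P : Kernel E E) : ℕ → Kernel E E
  | 0 => Kernel.id
  | n + 1 => P.comp (kpow P n)

/-- The process `Z` on `(Ω, μ)` is a (possibly time-inhomogeneous) Markov chain with
one-step kernels `Q n`, expressed through finite-dimensional distributions: for every
bounded measurable cylinder functional `φ` of the past and every Borel set `A`,
`E[φ(Z₀,…,Zₙ) · 1_A(Z_{n+1})] = E[φ(Z₀,…,Zₙ) · (Q n)(Zₙ, A)]`. -/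
def MCStep {Ω S : Type*} [MeasurableSpace Ω] [MeasurableSpace S]
    (μ : Measure Ω) (Q : ℕ → Kernel S S) (Z : ℕ → Ω → S) : Prop :=
  ∀ (n : ℕ) (A : Set S), MeasurableSet A →
    ∀ φ : (Fin (n + 1) → S) → ℝ, Measurable φ → (∀ v, φ v ∈ Set.Icc (0 : ℝ) 1) →
      ∫ ω, φ (fun i => Z i.1 ω) * A.indicator (fun _ => (1 : ℝ)) (Z (n + 1) ω) ∂μ
        = ∫ ω, φ (fun i => Z i.1 ω) * ((Q n) (Z n ω) A).toReal ∂μ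

/-- `X` on `(Ω, μ)` is a time-homogeneous Markov chain with kernel `P` started at `x`. -/
def IsMChain {E Ω : Type*} [MeasurableSpace E] [MeasurableSpace Ω]
    (P : Kernel E E) (x : E) (μ : Measure Ω) (X : ℕ → Ω → E) : Prop :=
  IsProbabilityMeasure μ ∧ (∀ n, Measurable (X n)) ∧ (∀ᵐ ω ∂μ, X 0 ω = x) ∧
    MCStep μ (fun _ => P) X

/-- A *Markovian coupling* of two chains with kernel `P` started at `x` and `y`:
both coordinates are Markov chains with kernel `P` and the pair process is itself a
(possibly time-inhomogeneous) Markov chain. -/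
def IsMarkovianCoupling {E Ω : Type*} [MeasurableSpace E] [MeasurableSpace Ω]
    (P : Kernel E E) (x y : E) (μ : Measure Ω) (X Y : ℕ → Ω → E) : Prop :=
  IsMChain P x μ X ∧ IsMChain P y μ Y ∧
    ∃ Q : ℕ → Kernel (E × E) (E × E), (∀ n, IsMarkovKernel (Q n)) ∧
      MCStep μ Q fun n ω => (X n ω, Y n ω)

/-- A set `H ⊆ E × E` is *achievable* for the kernel `P` if for all `x, y` there is a
Markovian coupling of the chains started at `x` and `y` whose hitting time of `H`
is finite almost surely. -/
def Achievable {E : Type*} [MeasurableSpace E] (P : Kernel E E) (H : Set (E × E)) : Prop :=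
  ∀ x y : E, ∃ (Ω : Type) (_ : MeasurableSpace Ω) (μ : Measure Ω) (X Y : ℕ → Ω → E),
    IsMarkovianCoupling P x y μ X Y ∧ ∀ᵐ ω ∂μ, ∃ n, (X n ω, Y n ω) ∈ H

/-- Condition (BMC): every increasing sequence bounded above by some element converges. -/
def BMC (E : Type*) [Preorder E] [TopologicalSpace E] : Prop :=
  ∀ (x : ℕ → E) (y : E), Monotone x → (∀ n, x n ≤ y) → ∃ l, Tendsto x atTop (nhds l)

/-- The ordered metric space `E` is *normal*: there is a continuous `h : [0,∞) → [0,∞)`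
with `h 0 = 0` such that `x ⪯ y ⪯ z` implies `d(x,y) ≤ h (d(x,z))`. -/
def NormalOrdered (E : Type*) [PseudoMetricSpace E] [Preorder E] : Prop :=
  ∃ h : ℝ → ℝ, ContinuousOn h (Set.Ici 0) ∧ h 0 = 0 ∧ (∀ t ≥ (0 : ℝ), 0 ≤ h t) ∧
    ∀ x y z : E, x ≤ y → y ≤ z → dist x y ≤ h (dist x z)

/-- Condition (PR): there are `x₀ ⪯ y₀` such that the hitting times
`ν⁻ = min {n ≥ 1 : Xₙ^{x₀} ⪰ x₀}` and `ν⁺ = min {n ≥ 1 : Xₙ^{y₀} ⪯ y₀}`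
have finite expectations. -/
def PRCond {E : Type*} [MeasurableSpace E] [Preorder E] (P : Kernel E E) : Prop :=
  ∃ x₀ y₀ : E, x₀ ≤ y₀ ∧
    (∃ (Ω : Type) (_ : MeasurableSpace Ω) (μ : Measure Ω) (X : ℕ → Ω → E),
      IsMChain P x₀ μ X ∧ (∀ᵐ ω ∂μ, ∃ n, 1 ≤ n ∧ x₀ ≤ X n ω) ∧
      Integrable (fun ω => ((sInf {n : ℕ | 1 ≤ n ∧ x₀ ≤ X n ω} : ℕ) : ℝ)) μ) ∧
    (∃ (Ω : Type) (_ : MeasurableSpace Ω) (μ : Measure Ω) (X : ℕ → Ω → E),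
      IsMChain P y₀ μ X ∧ (∀ᵐ ω ∂μ, ∃ n, 1 ≤ n ∧ X n ω ≤ y₀) ∧
      Integrable (fun ω => ((sInf {n : ℕ | 1 ≤ n ∧ X n ω ≤ y₀} : ℕ) : ℝ)) μ)

/-! A monotone kernel preserves stochastic domination, so the finite-dimensional marginals of the
chains started at `x k ≤ x (k + 1)` are stochastically ordered. The laws on path space are then
ordered as well: by inner regularity only compact sets of paths matter, and the upper closure of a
compact set is the decreasing intersection of closed cylinders.

Strassen's theorem therefore couples any two consecutive path laws monotonically. It is obtained by
compactifying into the Hilbert cube, extending `u(x) + v(y) ↦ ∫ u ∂μ + ∫ v ∂ν` to a functional on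
`C(K × L)` that is nonnegative on functions nonnegative on the order (M. Riesz), and representing
this functional by a measure (Riesz–Markov).

Consecutive couplings share a marginal, so they are glued by a Markov chain in the index `k` with
values in path space, whose transition kernels are their conditional kernels.
-/

/-! ### Comparing integrals through superlevel sets -/

section LayerCake

variable {α β : Type*} [MeasurableSpace α] [MeasurableSpace β] {μ : Measure α} {ν : Measure β}
  {f : α → ℝ} {g : β → ℝ}

lemma lintegral_ofReal_eq_lintegral_meas_le (hf : AEMeasurable f μ) :
    ∫⁻ x, ENNReal.ofReal (f x) ∂μ = ∫⁻ t in Set.Ioi 0, μ {x | t ≤ f x} := by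
  have layerCake := lintegral_eq_lintegral_meas_le μ (f := fun x => max (f x) 0)
    (.of_forall fun _ => le_max_right _ _) (hf.max aemeasurable_const)
  simp only [ENNReal.ofReal_max, ENNReal.ofReal_zero, zero_le, sup_of_le_left] at layerCake
  rw [layerCake]
  refine setLIntegral_congr_fun measurableSet_Ioi fun t (ht : 0 < t) => ?_
  simp only [le_max_iff, ht.not_ge, or_false]

lemma lintegral_ofReal_eq_lintegral_meas_lt (hf : AEMeasurable f μ) :
    ∫⁻ x, ENNReal.ofReal (f x) ∂μ = ∫⁻ t in Set.Ioi 0, μ {x | t < f x} := by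
  have layerCake := lintegral_eq_lintegral_meas_lt μ (f := fun x => max (f x) 0)
    (.of_forall fun _ => le_max_right _ _) (hf.max aemeasurable_const)
  simp only [ENNReal.ofReal_max, ENNReal.ofReal_zero, zero_le, sup_of_le_left] at layerCake
  rw [layerCake]
  refine setLIntegral_congr_fun measurableSet_Ioi fun t (ht : 0 < t) => ?_
  simp only [lt_max_iff, ht.not_gt, or_false]

lemma lintegral_ofReal_le_of_forall_meas_le (hf : AEMeasurable f μ) (hg : AEMeasurable g ν)
    (h : ∀ t, μ {x | t ≤ f x} ≤ ν {y | t ≤ g y}) :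
    ∫⁻ x, ENNReal.ofReal (f x) ∂μ ≤ ∫⁻ y, ENNReal.ofReal (g y) ∂ν := by
  rw [lintegral_ofReal_eq_lintegral_meas_le hf, lintegral_ofReal_eq_lintegral_meas_le hg]
  exact lintegral_mono h

lemma integral_le_of_forall_meas_le [IsProbabilityMeasure μ] [IsProbabilityMeasure ν]
    (hf : Integrable f μ) (hg : Integrable g ν) (h : ∀ t, μ {x | t ≤ f x} ≤ ν {y | t ≤ g y}) :
    ∫ x, f x ∂μ ≤ ∫ y, g y ∂ν := by
  have negPart_le : ∫⁻ y, ENNReal.ofReal (-g y) ∂ν ≤ ∫⁻ x, ENNReal.ofReal (-f x) ∂μ := by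
    rw [lintegral_ofReal_eq_lintegral_meas_lt hg.aemeasurable.fun_neg,
      lintegral_ofReal_eq_lintegral_meas_lt hf.aemeasurable.fun_neg]
    refine lintegral_mono fun t => ?_
    have compl_f : {x | t < -f x} = {x | -t ≤ f x}ᶜ := by ext; simp [lt_neg]
    have compl_g : {y | t < -g y} = {y | -t ≤ g y}ᶜ := by ext; simp [lt_neg]
    have level_f : NullMeasurableSet {x | -t ≤ f x} μ :=
      hf.aemeasurable.nullMeasurable measurableSet_Ici
    have level_g : NullMeasurableSet {y | -t ≤ g y} ν :=
      hg.aemeasurable.nullMeasurable measurableSet_Ici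
    rw [compl_f, compl_g, prob_compl_eq_one_sub₀ level_f, prob_compl_eq_one_sub₀ level_g]
    exact tsub_le_tsub_left (h (-t)) 1
  rw [integral_eq_lintegral_pos_part_sub_lintegral_neg_part hf,
    integral_eq_lintegral_pos_part_sub_lintegral_neg_part hg]
  exact sub_le_sub
    (ENNReal.toReal_mono hg.lintegral_lt_top.ne
      (lintegral_ofReal_le_of_forall_meas_le hf.aemeasurable hg.aemeasurable h))
    (ENNReal.toReal_mono hf.neg.lintegral_lt_top.ne negPart_le)

end LayerCake

/-! ### Couplings -/

/-- `π` is a coupling of `μ` and `ν`: a measure on the product whose marginals are `μ` and `ν`. -/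
structure IsCoupling {α β : Type*} [MeasurableSpace α] [MeasurableSpace β]
    (π : Measure (α × β)) (μ : Measure α) (ν : Measure β) : Prop where
  fst : π.fst = μ
  snd : π.snd = ν

namespace IsCoupling

variable {α β γ δ : Type*} [MeasurableSpace α] [MeasurableSpace β] [MeasurableSpace γ]
  [MeasurableSpace δ] {π : Measure (α × β)} {μ : Measure α} {ν : Measure β}

lemma isProbabilityMeasure [IsProbabilityMeasure μ] (h : IsCoupling π μ ν) :
    IsProbabilityMeasure π :=
  ⟨by rw [← Measure.fst_univ, h.fst, measure_univ]⟩

lemma map (h : IsCoupling π μ ν) {f : α → γ} {g : β → δ} (hf : Measurable f) (hg : Measurable g) :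
    IsCoupling (π.map (Prod.map f g)) (μ.map f) (ν.map g) where
  fst := by
    rw [← h.fst, Measure.fst, Measure.fst, Measure.map_map measurable_fst (hf.prodMap hg),
      Measure.map_map hf measurable_fst]
    rfl
  snd := by
    rw [← h.snd, Measure.snd, Measure.snd, Measure.map_map measurable_snd (hf.prodMap hg),
      Measure.map_map hg measurable_snd]
    rfl

lemma ae_fst (h : IsCoupling π μ ν) {p : α → Prop} (hp : ∀ᵐ x ∂μ, p x) : ∀ᵐ z ∂π, p z.1 :=
  ae_of_ae_map measurable_fst.aemeasurable (by rwa [← Measure.fst, h.fst])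

lemma ae_snd (h : IsCoupling π μ ν) {p : β → Prop} (hp : ∀ᵐ y ∂ν, p y) : ∀ᵐ z ∂π, p z.2 :=
  ae_of_ae_map measurable_snd.aemeasurable (by rwa [← Measure.snd, h.snd])

lemma exists_isCoupling_map_eq [Nonempty α] [Nonempty β] {f : α → γ} {g : β → δ}
    (hf : MeasurableEmbedding f) (hg : MeasurableEmbedding g) {π : Measure (γ × δ)}
    (h : IsCoupling π (μ.map f) (ν.map g)) :
    ∃ π', IsCoupling π' μ ν ∧ π'.map (Prod.map f g) = π := by
  refine ⟨π.map (Prod.map hf.invFun hg.invFun), ?_, ?_⟩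
  · have := h.map hf.measurable_invFun hg.measurable_invFun
    rwa [Measure.map_map hf.measurable_invFun hf.measurable, hf.leftInverse_invFun.comp_eq_id,
      Measure.map_map hg.measurable_invFun hg.measurable, hg.leftInverse_invFun.comp_eq_id,
      Measure.map_id, Measure.map_id] at this
  · rw [Measure.map_map (hf.measurable.prodMap hg.measurable)
      (hf.measurable_invFun.prodMap hg.measurable_invFun)]
    have range_fst := h.ae_fst (ae_map_mem_range f hf.measurableSet_range μ)
    have range_snd := h.ae_snd (ae_map_mem_range g hg.measurableSet_range ν)
    have ae_eq_id : Prod.map f g ∘ Prod.map hf.invFun hg.invFun =ᵐ[π] id := by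
      filter_upwards [range_fst, range_snd]
      rintro ⟨_, _⟩ ⟨a, rfl⟩ ⟨b, rfl⟩
      simp [hf.leftInverse_invFun a, hg.leftInverse_invFun b]
    rw [Measure.map_congr ae_eq_id, Measure.map_id]

end IsCoupling

/-! ### Strassen's theorem -/

section RieszMarkov

variable {X : Type*} [TopologicalSpace X] [CompactSpace X] [MeasurableSpace X] [BorelSpace X]

lemma integrable_continuousMap (μ : Measure X) [IsFiniteMeasure μ] (f : C(X, ℝ)) :
    Integrable f μ :=
  (BoundedContinuousFunction.mkOfCompact f).integrable μ

lemma exists_measure_forall_integral_eq [T2Space X] (Λ : C(X, ℝ) →ₗ[ℝ] ℝ)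
    (hΛ : ∀ f : C(X, ℝ), 0 ≤ f → 0 ≤ Λ f) :
    ∃ π : Measure X, IsFiniteMeasure π ∧ ∀ f : C(X, ℝ), ∫ z, f z ∂π = Λ f := by
  let Λc : CompactlySupportedContinuousMap X ℝ →ₗ[ℝ] ℝ :=
    { toFun := fun f => Λ f.toContinuousMap
      map_add' := fun f g => Λ.map_add f.toContinuousMap g.toContinuousMap
      map_smul' := fun c f => Λ.map_smul c f.toContinuousMap }
  let Λpos : CompactlySupportedContinuousMap X ℝ →ₚ[ℝ] ℝ :=
    PositiveLinearMap.mk₀ Λc fun f hf => hΛ f.toContinuousMap hf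
  refine ⟨RealRMK.rieszMeasure Λpos, ⟨?_⟩, fun f =>
    RealRMK.integral_rieszMeasure Λpos (CompactlySupportedContinuousMap.continuousMapEquiv f)⟩
  have : IsFiniteMeasureOnCompacts (RealRMK.rieszMeasure Λpos) := by
    unfold RealRMK.rieszMeasure
    infer_instance
  exact isCompact_univ.measure_lt_top

end RieszMarkov

lemma ae_mem_of_forall_integral_nonneg {X : Type*} [TopologicalSpace X] [CompactSpace X]
    [TopologicalSpace.MetrizableSpace X] [MeasurableSpace X] [BorelSpace X] {π : Measure X}
    [IsFiniteMeasure π] {R : Set X} (hR : IsClosed R)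
    (h : ∀ f : C(X, ℝ), (∀ z ∈ R, 0 ≤ f z) → 0 ≤ ∫ z, f z ∂π) :
    ∀ᵐ z ∂π, z ∈ R := by
  let _ : MetricSpace X := TopologicalSpace.metrizableSpaceMetric X
  rcases R.eq_empty_or_nonempty with rfl | hne
  · have real_univ_nonpos : 0 ≤ -π.real Set.univ := by simpa using h (-1) (by simp)
    have real_univ_eq_zero : π.real Set.univ = 0 :=
      le_antisymm (neg_nonneg.1 real_univ_nonpos) measureReal_nonneg
    have π_eq_zero : π = 0 :=
      Measure.measure_univ_eq_zero.1 ((measureReal_eq_zero_iff).1 real_univ_eq_zero)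
    simp [π_eq_zero]
  · let distR : C(X, ℝ) := ⟨fun z => Metric.infDist z R, Metric.continuous_infDist_pt R⟩
    have nonpos : ∫ z, distR z ∂π ≤ 0 := by
      have := h (-distR) fun z hz => by simp [distR, Metric.infDist_zero_of_mem hz]
      simpa [integral_neg] using this
    have eq_zero : ∫ z, distR z ∂π = 0 :=
      nonpos.antisymm (integral_nonneg fun _ => Metric.infDist_nonneg)
    filter_upwards [(integral_eq_zero_iff_of_nonneg (fun _ => Metric.infDist_nonneg)
      (integrable_continuousMap π distR)).1 eq_zero] with z hz
    exact (hR.mem_iff_infDist_zero hne).2 hz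

section Strassen

open ContinuousMap (fst snd)

variable {K L : Type*} [TopologicalSpace K] [CompactSpace K] [MeasurableSpace K] [BorelSpace K]
  [TopologicalSpace L] [CompactSpace L] [MeasurableSpace L] [BorelSpace L]
  (μ : Measure K) (ν : Measure L) [IsProbabilityMeasure μ] [IsProbabilityMeasure ν]
  {R : SetRel K L}

lemma integral_add_integral_nonneg_of_measure_le_image (h : ∀ A, IsClosed A → μ A ≤ ν (R.image A))
    (u : C(K, ℝ)) (v : C(L, ℝ)) (huv : ∀ z ∈ R, 0 ≤ u z.1 + v z.2) :
    0 ≤ ∫ x, u x ∂μ + ∫ y, v y ∂ν := by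
  have neg_le : ∫ x, (-u) x ∂μ ≤ ∫ y, v y ∂ν := by
    refine integral_le_of_forall_meas_le (integrable_continuousMap μ _)
      (integrable_continuousMap ν _) fun t => ?_
    refine (h _ (isClosed_le continuous_const (-u).continuous)).trans (measure_mono ?_)
    rintro y ⟨x, hx : t ≤ -u x, hxy⟩
    have : 0 ≤ u x + v y := huv (x, y) hxy
    exact (by linarith : t ≤ v y)
  simp only [ContinuousMap.neg_apply, integral_neg] at neg_le
  linarith

variable [TopologicalSpace.MetrizableSpace K] [TopologicalSpace.MetrizableSpace L]

lemma exists_linearMap_extending_integrals (h : ∀ A, IsClosed A → μ A ≤ ν (R.image A)) :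
    ∃ Λ : C(K × L, ℝ) →ₗ[ℝ] ℝ, (∀ u : C(K, ℝ), Λ (u.comp fst) = ∫ x, u x ∂μ) ∧
      (∀ v : C(L, ℝ), Λ (v.comp snd) = ∫ y, v y ∂ν) ∧
      ∀ f : C(K × L, ℝ), (∀ z ∈ R, 0 ≤ f z) → 0 ≤ Λ f := by
  let pullFst : C(K, ℝ) →ₗ[ℝ] C(K × L, ℝ) := (ContinuousMap.compRightAlgHom ℝ ℝ fst).toLinearMap
  let pullSnd : C(L, ℝ) →ₗ[ℝ] C(K × L, ℝ) := (ContinuousMap.compRightAlgHom ℝ ℝ snd).toLinearMap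
  let V : Submodule ℝ C(K × L, ℝ) := LinearMap.range pullFst ⊔ LinearMap.range pullSnd
  have pullFst_mem (u : C(K, ℝ)) : pullFst u ∈ V := Submodule.mem_sup_left ⟨u, rfl⟩
  have pullSnd_mem (v : C(L, ℝ)) : pullSnd v ∈ V := Submodule.mem_sup_right ⟨v, rfl⟩
  let I : C(K × L, ℝ) →ₗ[ℝ] ℝ :=
    { toFun := fun f => ∫ z, f z ∂(μ.prod ν)
      map_add' := fun f g => integral_add (integrable_continuousMap _ f)
        (integrable_continuousMap _ g)
      map_smul' := fun c f => integral_const_mul c _ }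
  have I_pullFst (u : C(K, ℝ)) : I (pullFst u) = ∫ x, u x ∂μ := by
    simpa [I, pullFst] using integral_fun_fst (μ := μ) (ν := ν) u
  have I_pullSnd (v : C(L, ℝ)) : I (pullSnd v) = ∫ y, v y ∂ν := by
    simpa [I, pullSnd] using integral_fun_snd (μ := μ) (ν := ν) v
  let nonnegOnR : PointedCone ℝ C(K × L, ℝ) :=
    { carrier := {f | ∀ z ∈ R, 0 ≤ f z}
      add_mem' := fun hf hg z hz => add_nonneg (hf z hz) (hg z hz)
      zero_mem' := fun _ _ => le_rfl
      smul_mem' := fun c _ hf z hz => mul_nonneg c.2 (hf z hz) }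
  have I_nonneg (f : V) (hf : f.1 ∈ nonnegOnR) : 0 ≤ I.domRestrict V f := by
    obtain ⟨_, ⟨u, rfl⟩, _, ⟨v, rfl⟩, huv⟩ := Submodule.mem_sup.1 f.2
    rw [LinearMap.domRestrict_apply, ← huv, map_add, I_pullFst, I_pullSnd]
    exact integral_add_integral_nonneg_of_measure_le_image μ ν h u v fun z hz => by
      simpa [← huv, pullFst, pullSnd] using hf z hz
  have V_cofinal (f : C(K × L, ℝ)) : ∃ c : V, (c : C(K × L, ℝ)) + f ∈ nonnegOnR :=
    ⟨⟨_, pullFst_mem (.const _ ‖f‖)⟩, fun z _ =>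
      neg_le_iff_add_nonneg'.1 (abs_le.1 (f.norm_coe_le_norm z)).1⟩
  obtain ⟨Λ, hΛ, Λ_nonneg⟩ := riesz_extension nonnegOnR ⟨V, I.domRestrict V⟩ I_nonneg V_cofinal
  exact ⟨Λ, fun u => (hΛ ⟨_, pullFst_mem u⟩).trans (I_pullFst u),
    fun v => (hΛ ⟨_, pullSnd_mem v⟩).trans (I_pullSnd v), Λ_nonneg⟩

lemma exists_isCoupling_of_compactSpace (hR : IsClosed R)
    (h : ∀ A, IsClosed A → μ A ≤ ν (R.image A)) :
    ∃ π, IsCoupling π μ ν ∧ ∀ᵐ z ∂π, z ∈ R := by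
  obtain ⟨Λ, Λ_fst, Λ_snd, Λ_nonneg⟩ := exists_linearMap_extending_integrals μ ν h
  obtain ⟨π, _, hπ⟩ := exists_measure_forall_integral_eq Λ fun f hf => Λ_nonneg f fun z _ => hf z
  refine ⟨π, ⟨?_, ?_⟩, ae_mem_of_forall_integral_nonneg hR fun f hf => ?_⟩
  · refine ext_of_forall_integral_eq_of_IsFiniteMeasure fun u => ?_
    rw [Measure.fst, integral_map (by fun_prop) (by fun_prop)]
    exact (hπ _).trans (Λ_fst u.toContinuousMap)
  · refine ext_of_forall_integral_eq_of_IsFiniteMeasure fun v => ?_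
    rw [Measure.snd, integral_map (by fun_prop) (by fun_prop)]
    exact (hπ _).trans (Λ_snd v.toContinuousMap)
  · rw [hπ]
    exact Λ_nonneg f hf

end Strassen

lemma exists_isEmbedding_hilbertCube (X : Type*) [TopologicalSpace X]
    [TopologicalSpace.MetrizableSpace X] [TopologicalSpace.SeparableSpace X] :
    ∃ e : X → ℕ → unitInterval, IsEmbedding e :=
  let _ : MetricSpace X := TopologicalSpace.metrizableSpaceMetric X
  Metric.PiNatEmbed.exists_embedding_to_hilbert_cube

lemma exists_isCoupling_of_isClosed {F G : Type*} [TopologicalSpace F] [PolishSpace F]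
    [MeasurableSpace F] [BorelSpace F] [TopologicalSpace G] [PolishSpace G] [MeasurableSpace G]
    [BorelSpace G] (μ : Measure F) (ν : Measure G) [IsProbabilityMeasure μ]
    [IsProbabilityMeasure ν] {R : SetRel F G} (hR : IsClosed R)
    (h : ∀ A, IsCompact A → μ A ≤ ν (R.image A)) :
    ∃ π, IsCoupling π μ ν ∧ ∀ᵐ z ∂π, z ∈ R := by
  have : Nonempty F := nonempty_of_isProbabilityMeasure μ
  have : Nonempty G := nonempty_of_isProbabilityMeasure ν
  obtain ⟨e, he⟩ := exists_isEmbedding_hilbertCube F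
  obtain ⟨e', he'⟩ := exists_isEmbedding_hilbertCube G
  have hem : MeasurableEmbedding e := he.continuous.measurableEmbedding he.injective
  have hem' : MeasurableEmbedding e' := he'.continuous.measurableEmbedding he'.injective
  have := Measure.isProbabilityMeasure_map (μ := μ) hem.measurable.aemeasurable
  have := Measure.isProbabilityMeasure_map (μ := ν) hem'.measurable.aemeasurable
  obtain ⟨π, hπ, hπR⟩ := exists_isCoupling_of_compactSpace (μ.map e) (ν.map e')
    (isClosed_closure (s := Prod.map e e' '' R)) fun B hB => by
      rw [hem.map_apply, (hem.measurable hB.measurableSet).measure_eq_iSup_isCompact]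
      refine iSup₂_le fun A hA => iSup_le fun hAc => ?_
      calc μ A ≤ ν (R.image A) := h A hAc
        _ ≤ ν (e' ⁻¹' SetRel.image (closure (Prod.map e e' '' R)) B) :=
          measure_mono fun y ⟨x, hx, hxy⟩ => ⟨e x, hA hx, subset_closure ⟨(x, y), hxy, rfl⟩⟩
        _ ≤ _ := Measure.le_map_apply hem'.measurable.aemeasurable _
  obtain ⟨π', hπ', rfl⟩ := hπ.exists_isCoupling_map_eq hem hem'
  refine ⟨π', hπ', ?_⟩
  filter_upwards [ae_of_ae_map (hem.measurable.prodMap hem'.measurable).aemeasurable hπR] with z hz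
  rwa [← hR.closure_eq, (he.prodMap he').closure_eq_preimage_closure_image]

/-! ### Stochastic domination -/

/-- Stochastic monotonicity of a kernel between two possibly different preordered spaces. Unlike
`MonotoneKernel` it is phrased through upper sets. -/
def StochMonotone {α β : Type*} [MeasurableSpace α] [MeasurableSpace β] [Preorder α] [Preorder β]
    (κ : Kernel α β) : Prop :=
  ∀ ⦃a b⦄, a ≤ b → StochDom (κ a) (κ b)

lemma MonotoneKernel.stochMonotone {E : Type*} [MeasurableSpace E] [Preorder E] {P : Kernel E E}
    [IsFiniteKernel P] (hP : MonotoneKernel P) : StochMonotone P := by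
  intro a b hab I hI hIup
  have indicator_mono : Monotone (I.indicator fun _ => (1 : ℝ)) := fun x y hxy => by
    by_cases hx : x ∈ I
    · simp [hx, hIup hxy hx]
    · simpa [hx] using Set.indicator_nonneg (fun _ _ => zero_le_one) y
  have integral_le := hP _ (measurable_const.indicator hI) indicator_mono
    (fun x => ⟨Set.indicator_nonneg (fun _ _ => zero_le_one) x,
      Set.indicator_le_self' (fun _ _ => zero_le_one) x⟩) hab
  simp only [integral_indicator_const _ hI, smul_eq_mul, mul_one] at integral_le
  exact (ENNReal.toReal_le_toReal (measure_ne_top _ _) (measure_ne_top _ _)).1 integral_le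

section StochDom

variable {α β : Type*} [MeasurableSpace α] [MeasurableSpace β] [Preorder α] [Preorder β]

lemma StochDom.dirac {a b : α} (hab : a ≤ b) : StochDom (.dirac a) (.dirac b) := by
  intro I hI hIup
  rw [Measure.dirac_apply' _ hI, Measure.dirac_apply' _ hI]
  by_cases ha : a ∈ I
  · simp [ha, hIup hab ha]
  · simp [ha]

variable {μ ν : Measure α}

lemma StochDom.map (h : StochDom μ ν) {f : α → β} (hf : Measurable f) (hfm : Monotone f) :
    StochDom (μ.map f) (ν.map f) := by
  intro I hI hIup
  rw [Measure.map_apply hf hI, Measure.map_apply hf hI]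
  exact h _ (hf hI) (hIup.preimage hfm)

lemma StochDom.lintegral_ofReal_le (h : StochDom μ ν) {f : α → ℝ} (hf : Measurable f)
    (hfm : Monotone f) : ∫⁻ a, ENNReal.ofReal (f a) ∂μ ≤ ∫⁻ a, ENNReal.ofReal (f a) ∂ν :=
  lintegral_ofReal_le_of_forall_meas_le hf.aemeasurable hf.aemeasurable fun _ =>
    h _ (hf measurableSet_Ici) fun _ _ hab hta => hta.trans (hfm hab)

lemma StochDom.compProd [SFinite μ] [SFinite ν] (h : StochDom μ ν) {κ : Kernel α β}
    [IsFiniteKernel κ] (hκ : StochMonotone κ) : StochDom (μ ⊗ₘ κ) (ν ⊗ₘ κ) := by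
  intro I hI hIup
  have section_mono : Monotone fun a => (κ a).real (Prod.mk a ⁻¹' I) := fun a b hab =>
    ENNReal.toReal_mono (measure_ne_top _ _) <| calc
      κ a (Prod.mk a ⁻¹' I) ≤ κ a (Prod.mk b ⁻¹' I) :=
        measure_mono fun _ hy => hIup (Prod.mk_le_mk.2 ⟨hab, le_rfl⟩) hy
      _ ≤ κ b (Prod.mk b ⁻¹' I) :=
        hκ hab _ (measurable_prodMk_left hI) (hIup.preimage (monotone_const.prodMk monotone_id))
  have := h.lintegral_ofReal_le (Kernel.measurable_kernel_prodMk_left hI).ennreal_toReal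
    section_mono
  simpa [Measure.compProd_apply hI, measureReal_def] using this

end StochDom

lemma isClosed_upperClosure_of_isCompact {F : Type*} [TopologicalSpace F] [Preorder F]
    [OrderClosedTopology F] {A : Set F} (hA : IsCompact A) :
    IsClosed (upperClosure A : Set F) := by
  have : CompactSpace A := isCompact_iff_compactSpace.1 hA
  have closed_graph : IsClosed {p : A × F | (p.1 : F) ≤ p.2} :=
    isClosed_le (continuous_subtype_val.comp continuous_fst) continuous_snd
  convert isClosedMap_snd_of_compactSpace _ closed_graph using 1
  ext y
  simp

section Polish

variable {F : Type*} [TopologicalSpace F] [PolishSpace F] [MeasurableSpace F] [BorelSpace F]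
  [Preorder F]

lemma stochDom_of_forall_isCompact {μ ν : Measure F} [IsFiniteMeasure μ]
    (h : ∀ A, IsCompact A → μ A ≤ ν (upperClosure A)) : StochDom μ ν := by
  intro I hI hIup
  rw [hI.measure_eq_iSup_isCompact]
  exact iSup₂_le fun A hAI => iSup_le fun hA =>
    (h A hA).trans (measure_mono (upperClosure_min hAI hIup))

lemma StochDom.exists_isCoupling [OrderClosedTopology F] {μ ν : Measure F}
    [IsProbabilityMeasure μ] [IsProbabilityMeasure ν] (h : StochDom μ ν) :
    ∃ π, IsCoupling π μ ν ∧ ∀ᵐ p ∂π, p.1 ≤ p.2 := by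
  refine exists_isCoupling_of_isClosed μ ν (R := {p | p.1 ≤ p.2})
    (isClosed_le continuous_fst continuous_snd) fun A hA => ?_
  calc μ A ≤ μ (upperClosure A) := measure_mono subset_upperClosure
    _ ≤ ν (upperClosure A) :=
      h _ (isClosed_upperClosure_of_isCompact hA).measurableSet (upperClosure A).upper

end Polish

section Product

open Preorder (frestrictLe)

variable {S : ℕ → Type*} [∀ n, Preorder (S n)]

lemma antitone_preimage_upperClosure_frestrictLe (A : Set (∀ n, S n)) :
    Antitone fun n => frestrictLe (π := S) n ⁻¹' upperClosure (frestrictLe n '' A) := by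
  rintro m n hmn z ⟨_, ⟨x, hx, rfl⟩, hxz⟩
  exact ⟨_, ⟨x, hx, rfl⟩, fun i => hxz ⟨i, Finset.Iic_subset_Iic.2 hmn i.2⟩⟩

variable [∀ n, TopologicalSpace (S n)] [∀ n, OrderClosedTopology (S n)]

lemma iInter_preimage_upperClosure_frestrictLe {A : Set (∀ n, S n)} (hA : IsCompact A) :
    ⋂ n, frestrictLe (π := S) n ⁻¹' upperClosure (frestrictLe n '' A) = upperClosure A := by
  refine subset_antisymm (fun z hz => ?_) (Set.subset_iInter fun n => ?_)
  · let below (n : ℕ) : Set (∀ n, S n) := {x | frestrictLe n x ≤ frestrictLe n z}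
    have below_closed (n : ℕ) : IsClosed (below n) :=
      isClosed_le (continuous_pi fun i => continuous_apply _) continuous_const
    have finite_inter (t : Finset ℕ) : (A ∩ ⋂ n ∈ t, below n).Nonempty := by
      obtain ⟨_, ⟨x, hx, rfl⟩, hxz⟩ := Set.mem_iInter.1 hz (t.sup id)
      exact ⟨x, hx, Set.mem_iInter₂.2 fun n hn i =>
        hxz ⟨i, Finset.Iic_subset_Iic.2 (t.le_sup (f := id) hn) i.2⟩⟩
    obtain ⟨x, hxA, hx⟩ := hA.inter_iInter_nonempty below below_closed finite_inter
    exact ⟨x, hxA, fun n => Set.mem_iInter.1 hx n ⟨n, Finset.mem_Iic.2 le_rfl⟩⟩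
  · rintro z ⟨x, hx, hxz⟩
    exact ⟨_, ⟨x, hx, rfl⟩, fun i => hxz i⟩

lemma StochDom.of_map_frestrictLe [∀ n, PolishSpace (S n)] [∀ n, MeasurableSpace (S n)]
    [∀ n, BorelSpace (S n)] {μ ν : Measure (∀ n, S n)}
    [IsFiniteMeasure μ] [IsFiniteMeasure ν]
    (h : ∀ n, StochDom (μ.map (frestrictLe n)) (ν.map (frestrictLe n))) : StochDom μ ν := by
  refine stochDom_of_forall_isCompact fun A hA => ?_
  have base_measurable (n : ℕ) : MeasurableSet
      (upperClosure (frestrictLe (π := S) n '' A) : Set (∀ i : Finset.Iic n, S i)) :=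
    (isClosed_upperClosure_of_isCompact
      (hA.image (Preorder.continuous_frestrictLe n))).measurableSet
  have le_cylinder (n : ℕ) :
      μ A ≤ ν (frestrictLe n ⁻¹' upperClosure (frestrictLe n '' A)) := by
    have := h n _ (base_measurable n) (upperClosure _).upper
    rw [Measure.map_apply (by fun_prop) (base_measurable n),
      Measure.map_apply (by fun_prop) (base_measurable n)] at this
    refine (measure_mono ?_).trans this
    exact (Set.subset_preimage_image _ _).trans (Set.preimage_mono subset_upperClosure)
  have tendsto_upperClosure := tendsto_measure_iInter_atTop (μ := ν)
    (fun n => (Preorder.measurable_frestrictLe n (base_measurable n)).nullMeasurableSet)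
    (antitone_preimage_upperClosure_frestrictLe A) ⟨0, measure_ne_top _ _⟩
  rw [iInter_preimage_upperClosure_frestrictLe hA] at tendsto_upperClosure
  exact ge_of_tendsto' tendsto_upperClosure le_cylinder

end Product

/-! ### Laws of Markov chains -/

section MarkovMeasure

open Preorder (frestrictLe)

variable {S : ℕ → Type*} [∀ n, MeasurableSpace (S n)]

/-- A one-step kernel `κ` out of time `n`, seen as a kernel reading the whole history up to time
`n`, which is the form required by the Ionescu-Tulcea theorem. -/
noncomputable def historyKernel {T : Type*} [MeasurableSpace T] {n : ℕ} (κ : Kernel (S n) T) :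
    Kernel (∀ i : Finset.Iic n, S i) T :=
  κ.comap (fun w => w ⟨n, Finset.mem_Iic.2 le_rfl⟩) (measurable_pi_apply _)

instance {T : Type*} [MeasurableSpace T] {n : ℕ} (κ : Kernel (S n) T) [IsMarkovKernel κ] :
    IsMarkovKernel (historyKernel κ) := by
  unfold historyKernel
  infer_instance

/-- The law on `∀ n, S n` of the time-inhomogeneous Markov chain with initial law `μ₀` and one-step
kernels `κ n`. The state space may depend on time. -/
noncomputable def markovMeasure (μ₀ : Measure (S 0)) (κ : ∀ n, Kernel (S n) (S (n + 1)))
    [∀ n, IsMarkovKernel (κ n)] : Measure (∀ n, S n) :=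
  Kernel.trajMeasure μ₀ fun n => historyKernel (κ n)

variable {μ₀ : Measure (S 0)} {κ : ∀ n, Kernel (S n) (S (n + 1))} [∀ n, IsMarkovKernel (κ n)]

lemma markovMeasure_map_frestrictLe_zero :
    (markovMeasure μ₀ κ).map (frestrictLe 0) =
      μ₀.map (MeasurableEquiv.piUnique fun i : Finset.Iic 0 => S i).symm := by
  rw [markovMeasure, Kernel.trajMeasure, Measure.map_comp _ _ (by fun_prop),
    Kernel.traj_map_frestrictLe, Kernel.partialTraj_self, Measure.id_comp]
  rfl

lemma markovMeasure_map_zero : (markovMeasure μ₀ κ).map (fun z => z 0) = μ₀ := by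
  let e : (∀ i : Finset.Iic 0, S i) ≃ᵐ S 0 :=
    MeasurableEquiv.piUnique fun i : Finset.Iic 0 => S i
  have eval_eq : (fun z : ∀ n, S n => z 0) = e ∘ frestrictLe 0 := rfl
  rw [eval_eq, ← Measure.map_map e.measurable (by fun_prop), markovMeasure_map_frestrictLe_zero]
  exact e.map_map_symm

variable [IsProbabilityMeasure μ₀]

instance : IsProbabilityMeasure (markovMeasure μ₀ κ) := by
  unfold markovMeasure
  infer_instance

lemma markovMeasure_map_frestrictLe_compProd (n : ℕ) :
    (markovMeasure μ₀ κ).map (frestrictLe n) ⊗ₘ historyKernel (κ n) =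
      (markovMeasure μ₀ κ).map fun z => (frestrictLe n z, z (n + 1)) :=
  Kernel.map_frestrictLe_trajMeasure_compProd_eq_map_trajMeasure

lemma markovMeasure_map_frestrictLe_succ (n : ℕ) :
    (markovMeasure μ₀ κ).map (frestrictLe (n + 1)) =
      ((markovMeasure μ₀ κ).map (frestrictLe n) ⊗ₘ historyKernel (κ n)).map
        (IicProdIoc n (n + 1) ∘ Prod.map id (MeasurableEquiv.piSingleton n)) := by
  rw [markovMeasure_map_frestrictLe_compProd, Measure.map_map (by fun_prop) (by fun_prop)]
  congr 1
  ext z ⟨i, hi⟩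
  rcases Nat.le_succ_iff.1 (Finset.mem_Iic.1 hi) with hin | rfl
  · simp [IicProdIoc, hin]
  · simp [IicProdIoc, MeasurableEquiv.piSingleton]

lemma markovMeasure_map_compProd (n : ℕ) :
    (markovMeasure μ₀ κ).map (fun z => z n) ⊗ₘ κ n =
      (markovMeasure μ₀ κ).map fun z => (z n, z (n + 1)) := by
  let last (w : ∀ i : Finset.Iic n, S i) : S n := w ⟨n, Finset.mem_Iic.2 le_rfl⟩
  have last_measurable : Measurable last := measurable_pi_apply _
  calc (markovMeasure μ₀ κ).map (fun z => z n) ⊗ₘ κ n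
      = ((markovMeasure μ₀ κ).map (frestrictLe n)).map last ⊗ₘ κ n := by
        rw [Measure.map_map last_measurable (by fun_prop)]
        rfl
    _ = ((markovMeasure μ₀ κ).map (frestrictLe n) ⊗ₘ historyKernel (κ n)).map
          (Prod.map last id) := by
        ext A hA
        rw [Measure.map_apply (by fun_prop) hA, Measure.compProd_apply hA,
          Measure.compProd_apply (by measurability), lintegral_map
          (Kernel.measurable_kernel_prodMk_left hA) last_measurable]
        rfl
    _ = (markovMeasure μ₀ κ).map fun z => (z n, z (n + 1)) := by
        rw [markovMeasure_map_frestrictLe_compProd, Measure.map_map (by fun_prop) (by fun_prop)]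
        rfl

lemma StochDom.markovMeasure [∀ n, TopologicalSpace (S n)] [∀ n, PolishSpace (S n)]
    [∀ n, BorelSpace (S n)] [∀ n, Preorder (S n)] [∀ n, OrderClosedTopology (S n)]
    {ν₀ : Measure (S 0)} [IsProbabilityMeasure ν₀] (h : StochDom μ₀ ν₀)
    (hκ : ∀ n, StochMonotone (κ n)) : StochDom (markovMeasure μ₀ κ) (markovMeasure ν₀ κ) := by
  refine .of_map_frestrictLe fun n => ?_
  induction n with
  | zero =>
    rw [markovMeasure_map_frestrictLe_zero, markovMeasure_map_frestrictLe_zero]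
    refine h.map (MeasurableEquiv.measurable _) fun a b hab => ?_
    rintro ⟨i, hi⟩
    obtain rfl := Nat.le_zero.1 (Finset.mem_Iic.1 hi)
    exact hab
  | succ n ih =>
    rw [markovMeasure_map_frestrictLe_succ, markovMeasure_map_frestrictLe_succ]
    refine (ih.compProd fun v w hvw => hκ n (hvw _)).map (by fun_prop) ?_
    rintro ⟨v, a⟩ ⟨w, b⟩ ⟨hvw, hab⟩ ⟨i, hi⟩
    rcases Nat.le_succ_iff.1 (Finset.mem_Iic.1 hi) with hin | rfl
    · simpa [IicProdIoc, hin] using hvw ⟨i, Finset.mem_Iic.2 hin⟩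
    · simpa [IicProdIoc, MeasurableEquiv.piSingleton] using hab

end MarkovMeasure

/-! ### Construction of the coupled chains -/

section Chain

variable {S : Type*} [MeasurableSpace S] {ρ : Measure S} [IsProbabilityMeasure ρ]

lemma mcStep_markovMeasure (κ : ℕ → Kernel S S) [∀ n, IsMarkovKernel (κ n)] :
    MCStep (markovMeasure ρ κ) κ fun n z => z n := by
  intro n A hA φ hφ hφ_mem
  let m : Measure (ℕ → S) := markovMeasure ρ κ
  let history : (ℕ → S) → ∀ _ : Finset.Iic n, S := Preorder.frestrictLe n
  let K : Kernel (∀ _ : Finset.Iic n, S) S := historyKernel (S := fun _ => S) (κ n)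
  let g (w : ∀ _ : Finset.Iic n, S) : ℝ :=
    φ fun i => w ⟨i, Finset.mem_Iic.2 (Nat.lt_succ_iff.1 i.2)⟩
  let f (p : (∀ _ : Finset.Iic n, S) × S) : ℝ := g p.1 * A.indicator (fun _ => 1) p.2
  have history_measurable : Measurable history := Preorder.measurable_frestrictLe n
  have pair_measurable : Measurable fun z => (history z, z (n + 1)) := by fun_prop
  have g_measurable : Measurable g := by fun_prop
  have f_measurable : Measurable f :=
    (g_measurable.comp measurable_fst).mul
      ((measurable_const.indicator hA).comp measurable_snd)
  have : IsProbabilityMeasure (m.map history) :=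
    Measure.isProbabilityMeasure_map history_measurable.aemeasurable
  have f_integrable : Integrable f (m.map history ⊗ₘ K) := by
    refine .of_mem_Icc 0 1 f_measurable.aemeasurable (ae_of_all _ fun p => ?_)
    refine unitInterval.mul_mem (hφ_mem _) ?_
    by_cases hp : p.2 ∈ A <;> simp [hp]
  calc ∫ z, g (history z) * A.indicator (fun _ => (1 : ℝ)) (z (n + 1)) ∂m
      = ∫ p, f p ∂m.map (fun z => (history z, z (n + 1))) :=
        (integral_map pair_measurable.aemeasurable f_measurable.aestronglyMeasurable).symm
    _ = ∫ w, ∫ y, f (w, y) ∂K w ∂m.map history := by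
        rw [← Measure.integral_compProd f_integrable, markovMeasure_map_frestrictLe_compProd]
    _ = ∫ w, g w * (K w).real A ∂m.map history := by
        simp only [f, integral_const_mul, integral_indicator_const _ hA, smul_eq_mul, mul_one]
    _ = ∫ z, g (history z) * (κ n (z n) A).toReal ∂m :=
        integral_map history_measurable.aemeasurable
          (g_measurable.mul (K.measurable_coe hA).ennreal_toReal).aestronglyMeasurable

lemma isMChain_markovMeasure [MeasurableSingletonClass S] (P : Kernel S S) [IsMarkovKernel P]
    (x : S) : IsMChain P x (markovMeasure (.dirac x) fun _ => P) fun n z => z n := by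
  refine ⟨inferInstance, measurable_pi_apply, ?_, mcStep_markovMeasure _⟩
  have zero_measurable : Measurable fun z : ℕ → S => z 0 := measurable_pi_apply 0
  refine ae_of_ae_map (p := (· = x)) zero_measurable.aemeasurable ?_
  rw [markovMeasure_map_zero (S := fun _ => S)]
  exact (ae_dirac_iff (measurableSet_singleton x)).2 rfl

variable {Ω Ω' : Type*} [MeasurableSpace Ω] [MeasurableSpace Ω'] {μ : Measure Ω} {Y : Ω → Ω'}
  {Z : ℕ → Ω' → S}

lemma MCStep.of_map {Q : ℕ → Kernel S S} (h : MCStep (μ.map Y) Q Z) (hY : Measurable Y)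
    (hZ : ∀ n, Measurable (Z n)) : MCStep μ Q fun n ω => Z n (Y ω) := by
  intro n A hA φ hφ hφ_mem
  have past_measurable : Measurable fun ω' => φ fun i : Fin (n + 1) => Z i ω' :=
    hφ.comp (measurable_pi_lambda _ fun i => hZ i)
  have lhs_measurable : Measurable fun ω' =>
      φ (fun i : Fin (n + 1) => Z i ω') * A.indicator (fun _ => (1 : ℝ)) (Z (n + 1) ω') :=
    past_measurable.mul ((measurable_const.indicator hA).comp (hZ _))
  have rhs_measurable : Measurable fun ω' =>
      φ (fun i : Fin (n + 1) => Z i ω') * (Q n (Z n ω') A).toReal :=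
    past_measurable.mul (((Q n).measurable_coe hA).ennreal_toReal.comp (hZ n))
  have := h n A hA φ hφ hφ_mem
  rwa [integral_map hY.aemeasurable lhs_measurable.aestronglyMeasurable,
    integral_map hY.aemeasurable rhs_measurable.aestronglyMeasurable] at this

lemma IsMChain.of_map {P : Kernel S S} {x : S} (h : IsMChain P x (μ.map Y) Z)
    (hY : Measurable Y) : IsMChain P x μ fun n ω => Z n (Y ω) := by
  obtain ⟨_, hZ, h_zero, h_step⟩ := h
  exact ⟨Measure.isProbabilityMeasure_of_map Y, fun n => (hZ n).comp hY,
    ae_of_ae_map hY.aemeasurable h_zero, h_step.of_map hY hZ⟩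

end Chain

lemma exists_measure_map_consecutive_eq {S : ℕ → Type*} [∀ k, MeasurableSpace (S k)]
    [∀ k, StandardBorelSpace (S k)] [∀ k, Nonempty (S k)] (π : ∀ k, Measure (S k × S (k + 1)))
    [∀ k, IsProbabilityMeasure (π k)] (hπ : ∀ k, (π k).snd = (π (k + 1)).fst) :
    ∃ M : Measure (∀ k, S k), IsProbabilityMeasure M ∧
      ∀ k, M.map (fun z => (z k, z (k + 1))) = π k := by
  let M := markovMeasure (π 0).fst fun k => (π k).condKernel
  have pair_eq (k : ℕ) (hk : M.map (fun z => z k) = (π k).fst) :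
      M.map (fun z => (z k, z (k + 1))) = π k := by
    rw [← markovMeasure_map_compProd, hk, (π k).disintegrate]
  have marginal_eq (k : ℕ) : M.map (fun z => z k) = (π k).fst := by
    induction k with
    | zero => exact markovMeasure_map_zero
    | succ k ih =>
      rw [← hπ, ← pair_eq k ih, Measure.snd_map_prodMk (by fun_prop)]
  exact ⟨M, inferInstance, fun k => pair_eq k (marginal_eq k)⟩

theorem stmt19_general {E : Type*} [TopologicalSpace E] [PolishSpace E] [MeasurableSpace E]
    [BorelSpace E] [Preorder E] [OrderClosedTopology E]
    (P : Kernel E E) [IsMarkovKernel P] (hmono : MonotoneKernel P)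
    (x : ℕ → E) (hx : Monotone x) :
    ∃ (Ω : Type) (_ : MeasurableSpace Ω) (μ : Measure Ω) (X : ℕ → ℕ → Ω → E),
      (∀ k, IsMChain P (x k) μ (X k)) ∧
      ∀ᵐ ω ∂μ, ∀ n k, X k n ω ≤ X (k + 1) n ω := by
  let m (k : ℕ) : Measure (ℕ → E) := markovMeasure (.dirac (x k)) fun _ => P
  have dom (k : ℕ) : StochDom (m k) (m (k + 1)) :=
    (StochDom.dirac (hx k.le_succ)).markovMeasure fun _ => hmono.stochMonotone
  choose π coupling ordered using fun k => (dom k).exists_isCoupling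
  have (k : ℕ) : IsProbabilityMeasure (π k) := (coupling k).isProbabilityMeasure
  have : Nonempty E := ⟨x 0⟩
  obtain ⟨M, _, hM⟩ := exists_measure_map_consecutive_eq (S := fun _ => ℕ → E) π
    fun k => (coupling k).snd.trans (coupling (k + 1)).fst.symm
  -- Moving `M` to the unit interval gives `Ω : Type`, whatever the universe of `E`.
  obtain ⟨Y, hY, rfl⟩ := M.exists_measurable_map_eq
  have law (k : ℕ) : volume.map (fun ω => Y ω k) = m k := by
    rw [← (coupling k).fst, ← hM k, Measure.fst_map_prodMk (by fun_prop),
      Measure.map_map (by fun_prop) hY]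
    rfl
  have ordered_Y (k : ℕ) : ∀ᵐ ω, Y ω k ≤ Y ω (k + 1) := by
    have := ordered k
    rw [← hM k, Measure.map_map (by fun_prop) hY] at this
    exact ae_of_ae_map (by fun_prop) this
  refine ⟨unitInterval, inferInstance, volume, fun k n ω => Y ω k n, fun k => ?_, ?_⟩
  · refine IsMChain.of_map (Y := fun ω => Y ω k) (Z := fun n z => z n) ?_ (by fun_prop)
    rw [law]
    exact isMChain_markovMeasure P (x k)
  · filter_upwards [ae_all_iff.2 ordered_Y] with ω hω n k
    exact hω k n

/-- Proposition 2.2: for a monotone Markov kernel `P` and any (countable)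
increasing sequence `x₁ ⪯ x₂ ⪯ …` of initial states, there is a coupling of the chains
`X^{x₁}, X^{x₂}, …` on a common probability space such that
`Xₙ^{x₁} ⪯ Xₙ^{x₂} ⪯ …` almost surely, for all `n`. -/
theorem stmt19 {E : Type*} [MetricSpace E] [PolishSpace E] [MeasurableSpace E] [BorelSpace E]
    [PartialOrder E] [OrderClosedTopology E]
    (P : Kernel E E) [IsMarkovKernel P] (hmono : MonotoneKernel P)
    (x : ℕ → E) (hx : Monotone x) :
    ∃ (Ω : Type) (_ : MeasurableSpace Ω) (μ : Measure Ω) (X : ℕ → ℕ → Ω → E),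
      (∀ k, IsMChain P (x k) μ (X k)) ∧
      ∀ᵐ ω ∂μ, ∀ n k, X k n ω ≤ X (k + 1) n ω :=
  stmt19_general P hmono x hx
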